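/- Let σ² : (0,∞) → (0,∞) be continuously differentiable and μ : (0,∞) → ℝ continuous, fix x₀ > 0, and let s_U, m_U, s_V, m_V be as above, with S_U(y) := ∫_{x₀}^y s_U(u) du and S_V(y) := ∫_{x₀}^y s_V(u) du. Then for all 0 < l < x < ∞: ∫_l^x ( S_U(y) - S_U(l) ) m_U(y) dy = ∫_l^x ( S_V(x) - S_V(u) ) m_V(u) du; that is, Feller's accessibility test I_U(l) for U equals Feller's entrance test J_V(l) for its Siegmund dual V. -/

import Mathlib

open Set

/-!
The term `(1/2) (σ²)'` of the dual drift contributes `(log σ²)'` to twice the drift over `σ²`, so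
the dual scale density is `s_V = σ²(x₀) / (σ² s_U) = σ²(x₀) m_U`, and hence also
`s_U = σ²(x₀) m_V`. Both tests are thus `1 / σ²(x₀)` times the integral of `s_U(u) s_V(y)` over the
triangle `l ≤ u ≤ y ≤ x`, computed in the two possible orders of integration.
-/

section AbsolutelyContinuous

open MeasureTheory

variable {a b : ℝ}

lemma intervalIntegrable_div_of_continuousOn {f g : ℝ → ℝ} (hf : IntervalIntegrable f volume a b)
    (hg : ContinuousOn g (uIcc a b)) (hg₀ : ∀ x ∈ uIcc a b, g x ≠ 0) :
    IntervalIntegrable (fun x => f x / g x) volume a b := by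
  simpa only [div_eq_mul_inv] using hf.mul_continuousOn (hg.fun_inv₀ hg₀)

lemma absolutelyContinuousOnInterval_comp_of_lipschitzOnWith {X Y : Type*} [PseudoMetricSpace X]
    [PseudoMetricSpace Y] {f : ℝ → X} {g : X → Y} {K : NNReal}
    (hg : LipschitzOnWith K g (f '' uIcc a b)) (hf : AbsolutelyContinuousOnInterval f a b) :
    AbsolutelyContinuousOnInterval (g ∘ f) a b := by
  refine squeeze_zero' (.of_forall fun E => Finset.sum_nonneg fun _ _ => dist_nonneg) ?_
    (by simpa only [mul_zero] using Filter.Tendsto.const_mul (K : ℝ) hf)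
  filter_upwards [Filter.mem_inf_of_right (Filter.mem_principal_self _)] with E hE
  rw [Finset.mul_sum]
  exact Finset.sum_le_sum fun i hi => hg.dist_le_mul _ (mem_image_of_mem f (hE.1 i hi).1)
    _ (mem_image_of_mem f (hE.1 i hi).2)

lemma integral_deriv_div_eq_log_sub_log {f : ℝ → ℝ} (hf : AbsolutelyContinuousOnInterval f a b)
    (hf₀ : ∀ x ∈ uIcc a b, f x ≠ 0) :
    ∫ x in a..b, deriv f x / f x = Real.log (f b) - Real.log (f a) := by
  have himage : f '' uIcc a b ⊆ {0}ᶜ := by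
    rintro _ ⟨x, hx, rfl⟩
    exact hf₀ x hx
  have hconvex : Convex ℝ (f '' uIcc a b) :=
    (isPreconnected_uIcc.image f hf.continuousOn).ordConnected.convex
  obtain ⟨K, hK⟩ := ((Real.contDiffOn_log (n := 1)).mono himage).exists_lipschitzOnWith
    one_ne_zero hconvex (isCompact_uIcc.image_of_continuousOn hf.continuousOn)
  have hlog := absolutelyContinuousOnInterval_comp_of_lipschitzOnWith hK hf
  refine Eq.trans (intervalIntegral.integral_congr_ae ?_) hlog.integral_deriv_eq_sub
  filter_upwards [hf.ae_differentiableAt] with x hdiff hx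
  have hx' := uIoc_subset_uIcc hx
  exact ((hdiff hx').hasDerivAt.log (hf₀ x hx')).deriv.symm

lemma integral_primitive_mul_eq_integral_mul_primitive {f g : ℝ → ℝ}
    (hf : IntervalIntegrable f volume a b) (hg : IntervalIntegrable g volume a b) :
    ∫ y in a..b, (∫ u in a..y, f u) * g y = ∫ u in a..b, f u * ∫ y in u..b, g y := by
  have hF := hf.absolutelyContinuousOnInterval_intervalIntegral left_mem_uIcc
  have hG := hg.absolutelyContinuousOnInterval_intervalIntegral right_mem_uIcc
  have hparts := hF.integral_mul_deriv_eq_deriv_mul hG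
  simp only [intervalIntegral.integral_same, mul_zero, zero_mul, sub_zero, zero_sub,
    ← intervalIntegral.integral_neg] at hparts
  refine .trans (intervalIntegral.integral_congr_ae ?_)
    (hparts.trans (intervalIntegral.integral_congr_ae ?_))
  · filter_upwards [hg.ae_hasDerivAt_integral] with y hderiv hy
    rw [(hderiv (uIoc_subset_uIcc hy) b right_mem_uIcc).deriv]
  · filter_upwards [hf.ae_hasDerivAt_integral] with u hderiv hu
    rw [(hderiv (uIoc_subset_uIcc hu) a left_mem_uIcc).deriv, intervalIntegral.integral_symm u b,
      mul_neg, neg_neg]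

end AbsolutelyContinuous

section Diffusion

open MeasureTheory

/-- The scale density `s(x) = exp (-∫_{x₀}^x 2μ/σ²)` of the diffusion with squared volatility
`sq = σ²` and drift `μ`, normalised at `x₀`. -/
noncomputable def scaleDensity (sq μ : ℝ → ℝ) (x₀ x : ℝ) : ℝ :=
  Real.exp (-∫ u in x₀..x, 2 * μ u / sq u)

/-- The scale function `S(y) = ∫_{x₀}^y s`. -/
noncomputable def scaleFunction (sq μ : ℝ → ℝ) (x₀ y : ℝ) : ℝ :=
  ∫ u in x₀..y, scaleDensity sq μ x₀ u

/-- The speed density `m = 1 / (σ² s)`. -/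
noncomputable def speedDensity (sq μ : ℝ → ℝ) (x₀ x : ℝ) : ℝ :=
  1 / (sq x * scaleDensity sq μ x₀ x)

/-- The drift `(1/2) (σ²)' - μ` of the Siegmund dual, whose squared volatility is still `σ²`.
If `σ²` is only absolutely continuous, this is meaningful almost everywhere, which determines the
dual scale density. -/
noncomputable def siegmundDrift (sq μ : ℝ → ℝ) (u : ℝ) : ℝ :=
  1 / 2 * deriv sq u - μ u

/-- Feller's accessibility test `I(l) = ∫_l^x (S(y) - S(l)) m(y) dy`. -/
noncomputable def accessibilityTest (sq μ : ℝ → ℝ) (x₀ l x : ℝ) : ℝ :=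
  ∫ y in l..x, (scaleFunction sq μ x₀ y - scaleFunction sq μ x₀ l) * speedDensity sq μ x₀ y

/-- Feller's entrance test `J(l) = ∫_l^x (S(x) - S(u)) m(u) du`. -/
noncomputable def entranceTest (sq μ : ℝ → ℝ) (x₀ l x : ℝ) : ℝ :=
  ∫ u in l..x, (scaleFunction sq μ x₀ x - scaleFunction sq μ x₀ u) * speedDensity sq μ x₀ u

variable {sq μ : ℝ → ℝ} {x₀ l x : ℝ}

lemma intervalIntegrable_siegmundDrift (hsq : AbsolutelyContinuousOnInterval sq l x)
    (hμ : IntervalIntegrable μ volume l x) :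
    IntervalIntegrable (siegmundDrift sq μ) volume l x :=
  (hsq.intervalIntegrable_deriv.const_mul _).sub hμ

lemma intervalIntegrable_scaleDensity (hsq : ContinuousOn sq (uIcc x₀ x))
    (hsq₀ : ∀ y ∈ uIcc x₀ x, sq y ≠ 0) (hμ : IntervalIntegrable μ volume x₀ x) :
    IntervalIntegrable (scaleDensity sq μ x₀) volume x₀ x := by
  have hdrift := intervalIntegrable_div_of_continuousOn (hμ.const_mul 2) hsq hsq₀
  have hprimitive := intervalIntegral.continuousOn_primitive_interval' hdrift left_mem_uIcc
  exact hprimitive.neg.rexp.intervalIntegrable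

lemma scaleFunction_sub (hl : IntervalIntegrable (scaleDensity sq μ x₀) volume x₀ l)
    (hx : IntervalIntegrable (scaleDensity sq μ x₀) volume x₀ x) :
    scaleFunction sq μ x₀ x - scaleFunction sq μ x₀ l = ∫ u in l..x, scaleDensity sq μ x₀ u :=
  intervalIntegral.integral_interval_sub_left hx hl

lemma scaleDensity_siegmundDrift (hpos : ∀ y ∈ uIcc x₀ x, 0 < sq y)
    (hsq : AbsolutelyContinuousOnInterval sq x₀ x) (hμ : IntervalIntegrable μ volume x₀ x) :
    scaleDensity sq (siegmundDrift sq μ) x₀ x = sq x₀ * speedDensity sq μ x₀ x := by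
  have hsq₀ : ∀ y ∈ uIcc x₀ x, sq y ≠ 0 := fun y hy => (hpos y hy).ne'
  have hexponent : ∫ u in x₀..x, 2 * siegmundDrift sq μ u / sq u =
      Real.log (sq x) - Real.log (sq x₀) - ∫ u in x₀..x, 2 * μ u / sq u := by
    rw [← integral_deriv_div_eq_log_sub_log hsq hsq₀, ← intervalIntegral.integral_sub
      (intervalIntegrable_div_of_continuousOn hsq.intervalIntegrable_deriv hsq.continuousOn hsq₀)
      (intervalIntegrable_div_of_continuousOn (hμ.const_mul 2) hsq.continuousOn hsq₀)]
    congr 1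
    ext u
    rw [siegmundDrift]
    ring
  simp only [speedDensity, scaleDensity, hexponent, sub_eq_add_neg, neg_add, neg_neg,
    Real.exp_add, Real.exp_neg, Real.exp_log (hpos x right_mem_uIcc),
    Real.exp_log (hpos x₀ left_mem_uIcc)]
  field_simp

lemma scaleDensity_eq_mul_speedDensity_siegmundDrift (hpos : ∀ y ∈ uIcc x₀ x, 0 < sq y)
    (hsq : AbsolutelyContinuousOnInterval sq x₀ x) (hμ : IntervalIntegrable μ volume x₀ x) :
    scaleDensity sq μ x₀ x = sq x₀ * speedDensity sq (siegmundDrift sq μ) x₀ x := by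
  have hsqx₀ := (hpos x₀ left_mem_uIcc).ne'
  have hsqx := (hpos x right_mem_uIcc).ne'
  have hs : scaleDensity sq μ x₀ x ≠ 0 := Real.exp_ne_zero _
  rw [speedDensity, scaleDensity_siegmundDrift hpos hsq hμ, speedDensity]
  field_simp

lemma accessibilityTest_eq_integral_primitive
    (hl : IntervalIntegrable (scaleDensity sq μ x₀) volume x₀ l)
    (hx : IntervalIntegrable (scaleDensity sq μ x₀) volume x₀ x) :
    accessibilityTest sq μ x₀ l x =
      ∫ y in l..x, (∫ u in l..y, scaleDensity sq μ x₀ u) * speedDensity sq μ x₀ y := by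
  refine intervalIntegral.integral_congr fun y hy => ?_
  have hly := (hl.symm.trans hx).mono_set (uIcc_subset_uIcc_left hy)
  exact congrArg (· * _) (scaleFunction_sub hl (hl.trans hly))

lemma entranceTest_eq_integral_primitive
    (hl : IntervalIntegrable (scaleDensity sq μ x₀) volume x₀ l)
    (hx : IntervalIntegrable (scaleDensity sq μ x₀) volume x₀ x) :
    entranceTest sq μ x₀ l x =
      ∫ u in l..x, (∫ y in u..x, scaleDensity sq μ x₀ y) * speedDensity sq μ x₀ u := by
  refine intervalIntegral.integral_congr fun u hu => ?_
  have hlu := (hl.symm.trans hx).mono_set (uIcc_subset_uIcc_left hu)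
  exact congrArg (· * _) (scaleFunction_sub (hl.trans hlu) hx)

lemma accessibilityTest_eq_entranceTest_of_scaleDensity_eq {sq' μ' : ℝ → ℝ} {c : ℝ} (hc : c ≠ 0)
    (hl : IntervalIntegrable (scaleDensity sq μ x₀) volume x₀ l)
    (hx : IntervalIntegrable (scaleDensity sq μ x₀) volume x₀ x)
    (hl' : IntervalIntegrable (scaleDensity sq' μ' x₀) volume x₀ l)
    (hx' : IntervalIntegrable (scaleDensity sq' μ' x₀) volume x₀ x)
    (hs' : ∀ y ∈ uIcc l x, scaleDensity sq' μ' x₀ y = c * speedDensity sq μ x₀ y)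
    (hs : ∀ u ∈ uIcc l x, scaleDensity sq μ x₀ u = c * speedDensity sq' μ' x₀ u) :
    accessibilityTest sq μ x₀ l x = entranceTest sq' μ' x₀ l x := by
  refine mul_left_cancel₀ hc ?_
  calc c * accessibilityTest sq μ x₀ l x
      = ∫ y in l..x, (∫ u in l..y, scaleDensity sq μ x₀ u) * scaleDensity sq' μ' x₀ y := by
        rw [accessibilityTest_eq_integral_primitive hl hx, ← intervalIntegral.integral_const_mul]
        refine intervalIntegral.integral_congr fun y hy => ?_
        simp only [hs' y hy, mul_left_comm]
    _ = ∫ u in l..x, scaleDensity sq μ x₀ u * ∫ y in u..x, scaleDensity sq' μ' x₀ y :=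
        integral_primitive_mul_eq_integral_mul_primitive (hl.symm.trans hx) (hl'.symm.trans hx')
    _ = c * entranceTest sq' μ' x₀ l x := by
        rw [entranceTest_eq_integral_primitive hl' hx', ← intervalIntegral.integral_const_mul]
        refine intervalIntegral.integral_congr fun u hu => ?_
        simp only [hs u hu, mul_assoc, mul_comm]

theorem stmt_16_general {I : Set ℝ} (hI : I.OrdConnected) (hpos : ∀ y ∈ I, 0 < sq y)
    (hsq : ∀ a ∈ I, ∀ b ∈ I, AbsolutelyContinuousOnInterval sq a b)
    (hμ : ∀ a ∈ I, ∀ b ∈ I, IntervalIntegrable μ volume a b)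
    (hx₀ : x₀ ∈ I) (hl : l ∈ I) (hx : x ∈ I) :
    accessibilityTest sq μ x₀ l x = entranceTest sq (siegmundDrift sq μ) x₀ l x := by
  replace hsq := hsq x₀ hx₀
  replace hμ := hμ x₀ hx₀
  have hpos' : ∀ y ∈ I, ∀ z ∈ uIcc x₀ y, 0 < sq z := fun y hy z hz =>
    hpos z (hI.uIcc_subset hx₀ hy hz)
  have hs : ∀ ν : ℝ → ℝ, (∀ y ∈ I, IntervalIntegrable ν volume x₀ y) →
      ∀ y ∈ I, IntervalIntegrable (scaleDensity sq ν x₀) volume x₀ y := fun ν hν y hy =>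
    intervalIntegrable_scaleDensity (hsq y hy).continuousOn (fun z hz => (hpos' y hy z hz).ne')
      (hν y hy)
  have hsU := hs μ hμ
  have hsV := hs _ fun y hy => intervalIntegrable_siegmundDrift (hsq y hy) (hμ y hy)
  have hsub := hI.uIcc_subset hl hx
  exact accessibilityTest_eq_entranceTest_of_scaleDensity_eq (hpos x₀ hx₀).ne'
    (hsU l hl) (hsU x hx) (hsV l hl) (hsV x hx)
    (fun y hy => scaleDensity_siegmundDrift (hpos' y (hsub hy)) (hsq y (hsub hy)) (hμ y (hsub hy)))
    (fun u hu => scaleDensity_eq_mul_speedDensity_siegmundDrift (hpos' u (hsub hu))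
      (hsq u (hsub hu)) (hμ u (hsub hu)))

end Diffusion

/-- Feller's accessibility test for `U` equals Feller's entrance test for its
Siegmund dual `V`: for all `0 < l < x`,
`∫_l^x (S_U(y) - S_U(l)) m_U(y) dy = ∫_l^x (S_V(x) - S_V(u)) m_V(u) du`. -/
theorem stmt_16 (sq μ : ℝ → ℝ)
    (hsqpos : ∀ x : ℝ, 0 < x → 0 < sq x)
    (hsqC1 : ContDiffOn ℝ 1 sq (Set.Ioi (0 : ℝ)))
    (hμ : ContinuousOn μ (Set.Ioi (0 : ℝ)))
    (x₀ : ℝ) (hx₀ : 0 < x₀)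
    (sU sV mU mV SU SV : ℝ → ℝ)
    (hsU : ∀ x : ℝ, sU x = Real.exp (-(∫ u in x₀..x, 2 * μ u / sq u)))
    (hsV : ∀ v : ℝ, sV v =
      Real.exp (-(∫ u in x₀..v, 2 * (1 / 2 * deriv sq u - μ u) / sq u)))
    (hmU : ∀ x : ℝ, mU x = 1 / (sq x * sU x))
    (hmV : ∀ x : ℝ, mV x = 1 / (sq x * sV x))
    (hSU : ∀ y : ℝ, SU y = ∫ u in x₀..y, sU u)
    (hSV : ∀ y : ℝ, SV y = ∫ u in x₀..y, sV u) :
    ∀ l x : ℝ, 0 < l → l < x →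
      ∫ y in l..x, (SU y - SU l) * mU y
        = ∫ u in l..x, (SV x - SV u) * mV u := by
  intro l x hl hlx
  simp only [hSU, hSV, hmU, hmV, hsU, hsV]
  have hsub {a b : ℝ} := ordConnected_Ioi.uIcc_subset (x := a) (y := b) (s := Ioi (0 : ℝ))
  exact stmt_16_general ordConnected_Ioi hsqpos
    (fun a ha b hb => (hsqC1.mono (hsub ha hb)).absolutelyContinuousOnInterval)
    (fun a ha b hb => (hμ.mono (hsub ha hb)).intervalIntegrable)
    hx₀ hl (hl.trans hlx)
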